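/- arXiv:1909.02818 — 2 statements merged into one kernel-verified Lean document; each statement's English description precedes it below -/
import Mathlib

section
/- Let U ⊆ ℝⁿ be open, let v : ℝⁿ → ℝⁿ be a C¹ vector field, let Pe and μ be real constants, and let φ, φ† : ℝⁿ → ℝ be C² functions such that the adjoint eigenvalue equation −Pe v·∇φ† − Δφ† = μ φ† holds at every point of U. Set β := φ φ†. Then for every C² function ω : ℝⁿ → ℝ and every x ∈ U, the pointwise identity φ†(x) · div( Pe v φ ω − ∇(φ ω) )(x) = div( (Pe v φ φ† + φ ∇φ† − φ† ∇φ) ω − β ∇ω )(x) + μ β(x) ω(x) holds. (This is the key decomposition identity φ† L(φω) = L*ω + ε⁻²λ β ω of Section 3.1, with μ = ε⁻²λ and Pe v* = Pe v φφ† + φ∇φ† − φ†∇φ.) -/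
/-!
The flux `(Pe v φφ† + φ∇φ† − φ†∇φ) ω − φφ† ∇ω` equals `φ† (Pe v c − ∇c) + c ∇φ†` with `c = φω`.
In the divergence of the latter the terms `∇φ† · ∇c` cancel, which leaves
`φ† L c − c L†φ†` (Lagrange's identity), and `L†φ† = μ φ†`.
-/

/-- Gradient of a scalar field on `ℝⁿ` (components w.r.t. the standard basis). -/
noncomputable def vgrad {n : ℕ} (f : (Fin n → ℝ) → ℝ) (x : Fin n → ℝ) : Fin n → ℝ :=
  fun i => fderiv ℝ f x (Pi.single i 1)

/-- Divergence of a vector field on `ℝⁿ`: `∑ i, ∂ᵢ Fᵢ`. -/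
noncomputable def vdiv {n : ℕ} (F : (Fin n → ℝ) → (Fin n → ℝ)) (x : Fin n → ℝ) : ℝ :=
  ∑ i, fderiv ℝ (fun y => F y i) x (Pi.single i 1)

open scoped Topology

section VectorCalculus

variable {n : ℕ} {f g : (Fin n → ℝ) → ℝ} {F G : (Fin n → ℝ) → (Fin n → ℝ)} {x : Fin n → ℝ}

theorem vgrad_mul (hf : DifferentiableAt ℝ f x) (hg : DifferentiableAt ℝ g x) :
    vgrad (f * g) x = f x • vgrad g x + g x • vgrad f x := by
  ext i
  simp [vgrad, fderiv_mul hf hg]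

theorem differentiableAt_vgrad (hf : ContDiffAt ℝ 2 f x) :
    DifferentiableAt ℝ (vgrad f) x := by
  have hf' : DifferentiableAt ℝ (fderiv ℝ f) x :=
    (hf.fderiv_right (m := 1) (by norm_num)).differentiableAt one_ne_zero
  exact differentiableAt_pi.2 fun i => hf'.clm_apply (differentiableAt_const _)

theorem vdiv_congr_of_eventuallyEq (h : F =ᶠ[𝓝 x] G) : vdiv F x = vdiv G x := by
  refine Finset.sum_congr rfl fun i _ => ?_
  have hi : (fun y => F y i) =ᶠ[𝓝 x] fun y => G y i := h.mono fun y hy => congrFun hy i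
  rw [hi.fderiv_eq]

theorem vdiv_add (hF : DifferentiableAt ℝ F x) (hG : DifferentiableAt ℝ G x) :
    vdiv (F + G) x = vdiv F x + vdiv G x := by
  simp only [vdiv, Pi.add_apply, ← Finset.sum_add_distrib]
  refine Finset.sum_congr rfl fun i _ => ?_
  rw [fderiv_fun_add (differentiableAt_pi.1 hF i) (differentiableAt_pi.1 hG i), add_apply]

theorem vdiv_smul (hf : DifferentiableAt ℝ f x) (hF : DifferentiableAt ℝ F x) :
    vdiv (f • F) x = f x * vdiv F x + F x ⬝ᵥ vgrad f x := by
  simp only [vdiv, vgrad, dotProduct, Pi.smul_apply', Pi.smul_apply, smul_eq_mul, Finset.mul_sum,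
    ← Finset.sum_add_distrib]
  refine Finset.sum_congr rfl fun i _ => ?_
  simp [fderiv_fun_mul hf (differentiableAt_pi.1 hF i)]

end VectorCalculus

section AdvectionDiffusion

variable {n : ℕ} {Pe : ℝ} {v : (Fin n → ℝ) → (Fin n → ℝ)} {x : Fin n → ℝ}

/-- The advection–diffusion flux `Pe v c − ∇c`; its divergence is the operator `L c`. -/
noncomputable def advDiffFlux (Pe : ℝ) (v : (Fin n → ℝ) → (Fin n → ℝ)) (c : (Fin n → ℝ) → ℝ)
    (x : Fin n → ℝ) : Fin n → ℝ :=
  fun i => Pe * v x i * c x - vgrad c x i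

/-- The formal adjoint `L† p = −Pe v·∇p − Δp` of the operator `c ↦ vdiv (advDiffFlux Pe v c)`. -/
noncomputable def advDiffAdjoint (Pe : ℝ) (v : (Fin n → ℝ) → (Fin n → ℝ))
    (p : (Fin n → ℝ) → ℝ) (x : Fin n → ℝ) : ℝ :=
  -Pe * (v x ⬝ᵥ vgrad p x) - vdiv (vgrad p) x

/-- The flux `(Pe v φp + φ∇p − p∇φ) ω − φp ∇ω`, i.e. `Pe v* ω − β∇ω` with `β = φp`; its
divergence is the operator `L* ω` of the decomposition. -/
noncomputable def transformedFlux (Pe : ℝ) (v : (Fin n → ℝ) → (Fin n → ℝ))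
    (φ p ω : (Fin n → ℝ) → ℝ) (x : Fin n → ℝ) : Fin n → ℝ :=
  fun i => (Pe * v x i * (φ x * p x) + φ x * vgrad p x i - p x * vgrad φ x i) * ω x
    - (φ x * p x) * vgrad ω x i

theorem differentiableAt_advDiffFlux {c : (Fin n → ℝ) → ℝ} (hv : DifferentiableAt ℝ v x)
    (hc : ContDiffAt ℝ 2 c x) : DifferentiableAt ℝ (advDiffFlux Pe v c) x :=
  differentiableAt_pi.2 fun i =>
    (((differentiableAt_pi.1 hv i).const_mul Pe).mul (hc.differentiableAt two_ne_zero)).sub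
      (differentiableAt_pi.1 (differentiableAt_vgrad hc) i)

theorem advDiffFlux_add_vgrad_dotProduct (c : (Fin n → ℝ) → ℝ) (w : Fin n → ℝ) :
    (advDiffFlux Pe v c x + vgrad c x) ⬝ᵥ w = c x * (Pe * (v x ⬝ᵥ w)) := by
  have hflux : advDiffFlux Pe v c x + vgrad c x = (c x * Pe) • v x := by
    ext i
    simp only [advDiffFlux, Pi.add_apply, Pi.smul_apply, smul_eq_mul]
    ring
  rw [hflux, smul_dotProduct, smul_eq_mul, mul_assoc]

theorem vdiv_smul_advDiffFlux_add_smul_vgrad {p c : (Fin n → ℝ) → ℝ}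
    (hv : DifferentiableAt ℝ v x) (hp : ContDiffAt ℝ 2 p x) (hc : ContDiffAt ℝ 2 c x) :
    vdiv (p • advDiffFlux Pe v c + c • vgrad p) x =
      p x * vdiv (advDiffFlux Pe v c) x - c x * advDiffAdjoint Pe v p x := by
  have hp' : DifferentiableAt ℝ p x := hp.differentiableAt two_ne_zero
  have hc' : DifferentiableAt ℝ c x := hc.differentiableAt two_ne_zero
  have hflux := differentiableAt_advDiffFlux (Pe := Pe) hv hc
  have hgrad := differentiableAt_vgrad hp
  have hcross := advDiffFlux_add_vgrad_dotProduct (Pe := Pe) (v := v) (x := x) c (vgrad p x)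
  rw [add_dotProduct, dotProduct_comm (vgrad c x)] at hcross
  rw [vdiv_add (hp'.smul hflux) (hc'.smul hgrad), vdiv_smul hp' hflux, vdiv_smul hc' hgrad,
    advDiffAdjoint]
  linear_combination hcross

theorem transformedFlux_eq_smul_add_smul {φ ω : (Fin n → ℝ) → ℝ} (p : (Fin n → ℝ) → ℝ)
    (hφ : DifferentiableAt ℝ φ x) (hω : DifferentiableAt ℝ ω x) :
    transformedFlux Pe v φ p ω x =
      p x • advDiffFlux Pe v (φ * ω) x + (φ x * ω x) • vgrad p x := by
  ext i
  simp only [transformedFlux, advDiffFlux, vgrad_mul hφ hω, Pi.add_apply, Pi.mul_apply,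
    Pi.smul_apply, smul_eq_mul]
  ring

theorem spectral_decomposition_identity_general {φ p ω : (Fin n → ℝ) → ℝ}
    (hv : DifferentiableAt ℝ v x) (hφ : ContDiffAt ℝ 2 φ x) (hp : ContDiffAt ℝ 2 p x)
    (hω : ContDiffAt ℝ 2 ω x) :
    p x * vdiv (advDiffFlux Pe v (φ * ω)) x =
      vdiv (transformedFlux Pe v φ p ω) x + φ x * ω x * advDiffAdjoint Pe v p x := by
  have hflux : transformedFlux Pe v φ p ω =ᶠ[𝓝 x]
      p • advDiffFlux Pe v (φ * ω) + (φ * ω) • vgrad p := by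
    filter_upwards [hφ.eventually (by simp), hω.eventually (by simp)] with y hφy hωy
    exact transformedFlux_eq_smul_add_smul p (hφy.differentiableAt two_ne_zero)
      (hωy.differentiableAt two_ne_zero)
  rw [vdiv_congr_of_eventuallyEq hflux,
    vdiv_smul_advDiffFlux_add_smul_vgrad (c := φ * ω) hv hp (hφ.mul hω), Pi.mul_apply,
    sub_add_cancel]

end AdvectionDiffusion

/-- The key decomposition identity `φ† L(φω) = L*ω + ε⁻²λ β ω` (Section 3.1),
with `μ = ε⁻²λ` and `Pe v* = Pe v φφ† + φ∇φ† − φ†∇φ`, `β = φφ†`. -/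
theorem spectral_decomposition_identity {n : ℕ}
    (U : Set (Fin n → ℝ)) (hU : IsOpen U)
    (v : (Fin n → ℝ) → (Fin n → ℝ)) (hv : ContDiff ℝ 1 v)
    (Pe μ : ℝ) (φ φd : (Fin n → ℝ) → ℝ)
    (hφ : ContDiff ℝ 2 φ) (hφd : ContDiff ℝ 2 φd)
    (hadj : ∀ x ∈ U,
      -Pe * (∑ i, v x i * vgrad φd x i) - vdiv (vgrad φd) x = μ * φd x)
    (ω : (Fin n → ℝ) → ℝ) (hω : ContDiff ℝ 2 ω) :
    ∀ x ∈ U,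
      φd x *
        vdiv (fun y i => Pe * v y i * (φ y * ω y) - vgrad (fun z => φ z * ω z) y i) x
      =
      vdiv (fun y i =>
          (Pe * v y i * (φ y * φd y) + φ y * vgrad φd y i - φd y * vgrad φ y i) * ω y
            - (φ y * φd y) * vgrad ω y i) x
        + μ * (φ x * φd x) * ω x := by
  intro x hx
  have hadjx : advDiffAdjoint Pe v φd x = μ * φd x := hadj x hx
  exact (spectral_decomposition_identity_general (hv.differentiable one_ne_zero x) hφ.contDiffAt
    hφd.contDiffAt hω.contDiffAt).trans <| congrArg (_ + ·) <| by rw [hadjx]; ring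
end

section
/- Let U ⊆ ℝⁿ be open, let v : ℝⁿ → ℝⁿ be a C¹ vector field with div v = 0 on U, let Pe and μ be real constants, and let φ, φ† : ℝⁿ → ℝ be C² functions satisfying on U the direct eigenvalue equation div(Pe v φ − ∇φ) = μ φ and the adjoint eigenvalue equation −Pe v·∇φ† − Δφ† = μ φ†. Then the modified drift field Pe v* := Pe v φ φ† + φ ∇φ† − φ† ∇φ is divergence-free on U: div( Pe v φ φ† + φ ∇φ† − φ† ∇φ ) = 0 at every point of U. -/
open scoped Matrix

section VectorCalculus

variable {n : ℕ} {f : (Fin n → ℝ) → ℝ} {F G : (Fin n → ℝ) → (Fin n → ℝ)} {x : Fin n → ℝ}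

lemma vdiv_fun_add (hF : DifferentiableAt ℝ F x) (hG : DifferentiableAt ℝ G x) :
    vdiv (fun y => F y + G y) x = vdiv F x + vdiv G x := by
  simp only [vdiv, ← Finset.sum_add_distrib]
  refine Finset.sum_congr rfl fun i _ => ?_
  exact DFunLike.congr_fun
    (fderiv_fun_add (differentiableAt_pi.1 hF i) (differentiableAt_pi.1 hG i)) _

lemma vdiv_fun_smul (hf : DifferentiableAt ℝ f x) (hF : DifferentiableAt ℝ F x) :
    vdiv (fun y => f y • F y) x = f x * vdiv F x + F x ⬝ᵥ vgrad f x := by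
  simp only [vdiv, vgrad, dotProduct, Finset.mul_sum, ← Finset.sum_add_distrib]
  refine Finset.sum_congr rfl fun i _ => ?_
  exact DFunLike.congr_fun (fderiv_fun_mul hf (differentiableAt_pi.1 hF i)) _

lemma differentiable_vgrad (hf : ContDiff ℝ 2 f) : Differentiable ℝ (vgrad f) :=
  differentiable_pi.2 fun _ =>
    ((hf.fderiv_right (m := 1) (by norm_num)).differentiable one_ne_zero).clm_apply
      (differentiable_const _)

end VectorCalculus

section AdvectionDiffusion

variable {n : ℕ} (Pe : ℝ) (v : (Fin n → ℝ) → (Fin n → ℝ)) (c φ ψ : (Fin n → ℝ) → ℝ)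

/-- The flux `Pe v c − ∇c` of a concentration `c` advected by `v`, whose divergence is the
advection–diffusion operator. -/
noncomputable def advectionDiffusionFlux : (Fin n → ℝ) → (Fin n → ℝ) :=
  fun y i => Pe * v y i * c y - vgrad c y i

/-- The steady advection–diffusion operator `L c = div (Pe v c − ∇c)`. -/
noncomputable def advectionDiffusion : (Fin n → ℝ) → ℝ :=
  vdiv (advectionDiffusionFlux Pe v c)

/-- The operator `L† c = −Pe v · ∇c − Δc`, with `Δc` encoded as `vdiv (vgrad c)`. It is the formal
adjoint of `advectionDiffusion`. -/
noncomputable def advectionDiffusionAdjoint : (Fin n → ℝ) → ℝ :=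
  fun x => -Pe * (v x ⬝ᵥ vgrad c x) - vdiv (vgrad c) x

/-- The modified drift `Pe v* = Pe v φ ψ + φ ∇ψ − ψ ∇φ` of a direct field `φ` and an adjoint
field `ψ`; the factor `Pe` is part of it. -/
noncomputable def modifiedDrift : (Fin n → ℝ) → (Fin n → ℝ) :=
  fun y i => Pe * v y i * (φ y * ψ y) + φ y * vgrad ψ y i - ψ y * vgrad φ y i

lemma advectionDiffusionFlux_eq_smul_sub_vgrad :
    advectionDiffusionFlux Pe v c = fun y => (Pe * c y) • v y - vgrad c y := by
  ext y i
  simp only [advectionDiffusionFlux, Pi.sub_apply, Pi.smul_apply, smul_eq_mul]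
  ring

lemma modifiedDrift_eq_smul_flux_add_smul_vgrad :
    modifiedDrift Pe v φ ψ =
      fun y => ψ y • advectionDiffusionFlux Pe v φ y + φ y • vgrad ψ y := by
  ext y i
  simp only [modifiedDrift, advectionDiffusionFlux, Pi.add_apply, Pi.smul_apply, smul_eq_mul]
  ring

variable {Pe v c φ ψ} {μ : ℝ} {x : Fin n → ℝ}

lemma differentiableAt_advectionDiffusionFlux (hv : DifferentiableAt ℝ v x)
    (hc : DifferentiableAt ℝ c x) (hgrad : DifferentiableAt ℝ (vgrad c) x) :
    DifferentiableAt ℝ (advectionDiffusionFlux Pe v c) x := by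
  rw [advectionDiffusionFlux_eq_smul_sub_vgrad]
  exact ((hc.const_mul Pe).smul hv).sub hgrad

lemma vdiv_modifiedDrift (hv : DifferentiableAt ℝ v x)
    (hφ : DifferentiableAt ℝ φ x) (hgradφ : DifferentiableAt ℝ (vgrad φ) x)
    (hψ : DifferentiableAt ℝ ψ x) (hgradψ : DifferentiableAt ℝ (vgrad ψ) x) :
    vdiv (modifiedDrift Pe v φ ψ) x =
      ψ x * advectionDiffusion Pe v φ x - φ x * advectionDiffusionAdjoint Pe v ψ x := by
  have hflux : DifferentiableAt ℝ (advectionDiffusionFlux Pe v φ) x :=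
    differentiableAt_advectionDiffusionFlux hv hφ hgradφ
  have hdot : advectionDiffusionFlux Pe v φ x ⬝ᵥ vgrad ψ x =
      Pe * φ x * (v x ⬝ᵥ vgrad ψ x) - vgrad ψ x ⬝ᵥ vgrad φ x := by
    rw [advectionDiffusionFlux_eq_smul_sub_vgrad, sub_dotProduct, smul_dotProduct, smul_eq_mul,
      dotProduct_comm (vgrad φ x)]
  calc vdiv (modifiedDrift Pe v φ ψ) x
      = vdiv (fun y => ψ y • advectionDiffusionFlux Pe v φ y) x +
          vdiv (fun y => φ y • vgrad ψ y) x := by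
        rw [modifiedDrift_eq_smul_flux_add_smul_vgrad,
          vdiv_fun_add (hψ.fun_smul hflux) (hφ.fun_smul hgradψ)]
    _ = (ψ x * advectionDiffusion Pe v φ x + advectionDiffusionFlux Pe v φ x ⬝ᵥ vgrad ψ x) +
          (φ x * vdiv (vgrad ψ) x + vgrad ψ x ⬝ᵥ vgrad φ x) := by
        rw [vdiv_fun_smul hψ hflux, vdiv_fun_smul hφ hgradψ, advectionDiffusion]
    _ = ψ x * advectionDiffusion Pe v φ x - φ x * advectionDiffusionAdjoint Pe v ψ x := by
        rw [hdot, advectionDiffusionAdjoint]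
        ring

theorem modified_drift_divergence_free_general (hv : DifferentiableAt ℝ v x)
    (hφ : DifferentiableAt ℝ φ x) (hgradφ : DifferentiableAt ℝ (vgrad φ) x)
    (hψ : DifferentiableAt ℝ ψ x) (hgradψ : DifferentiableAt ℝ (vgrad ψ) x)
    (hdirect : advectionDiffusion Pe v φ x = μ * φ x)
    (hadj : advectionDiffusionAdjoint Pe v ψ x = μ * ψ x) :
    vdiv (modifiedDrift Pe v φ ψ) x = 0 := by
  rw [vdiv_modifiedDrift hv hφ hgradφ hψ hgradψ, hdirect, hadj]
  ring

end AdvectionDiffusion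

/-- The modified drift field `Pe v* = Pe v φφ† + φ∇φ† − φ†∇φ` is divergence-free,
given the direct and adjoint eigenvalue equations and a solenoidal velocity `v`. -/
theorem modified_drift_divergence_free {n : ℕ}
    (U : Set (Fin n → ℝ)) (hU : IsOpen U)
    (v : (Fin n → ℝ) → (Fin n → ℝ)) (hv : ContDiff ℝ 1 v)
    (hdivv : ∀ x ∈ U, vdiv v x = 0)
    (Pe μ : ℝ) (φ φd : (Fin n → ℝ) → ℝ)
    (hφ : ContDiff ℝ 2 φ) (hφd : ContDiff ℝ 2 φd)
    (hdirect : ∀ x ∈ U,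
      vdiv (fun y i => Pe * v y i * φ y - vgrad φ y i) x = μ * φ x)
    (hadj : ∀ x ∈ U,
      -Pe * (∑ i, v x i * vgrad φd x i) - vdiv (vgrad φd) x = μ * φd x) :
    ∀ x ∈ U,
      vdiv (fun y i =>
        Pe * v y i * (φ y * φd y) + φ y * vgrad φd y i - φd y * vgrad φ y i) x = 0 := fun x hx =>
  modified_drift_divergence_free_general (hv.differentiable one_ne_zero x)
    (hφ.differentiable two_ne_zero x) (differentiable_vgrad hφ x)
    (hφd.differentiable two_ne_zero x) (differentiable_vgrad hφd x) (hdirect x hx) (hadj x hx)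
end
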